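/- arXiv:1704.05641 — 4 statements merged into one kernel-verified Lean document; each statement's English description precedes it below -/
import Mathlib

section
/- The distance function d of the constructed MUFL instance is a metric on C ∪ F. That is, for all points p, q, r in C ∪ F: d(p,q) = 0 if and only if p = q, d(p,q) = d(q,p), and d(p,r) ≤ d(p,q) + d(q,r). -/
open Finset
open scoped ENNReal

/-- A literal over `N` variables: a variable index together with a polarity
(`true` = positive literal `x_n`, `false` = negated literal `x̄_n`). -/
abbrev Lit (N : ℕ) := Fin N × Bool

/-- The negation of a literal. -/
def Lit.neg {N : ℕ} (p : Lit N) : Lit N := (p.1, !p.2)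

/-- A 2-SAT clause: two literals over distinct variables. -/
structure Clause (N : ℕ) where
  l1 : Lit N
  l2 : Lit N
  distinct : l1.1 ≠ l2.1

/-- The literal `p` occurs in the clause `cl`. -/
def Clause.occurs {N : ℕ} (p : Lit N) (cl : Clause N) : Prop := p = cl.l1 ∨ p = cl.l2

instance {N : ℕ} (p : Lit N) (cl : Clause N) : Decidable (Clause.occurs p cl) := by
  unfold Clause.occurs; infer_instance

/-- The truth assignment `T` satisfies the clause `cl`. -/
def Clause.satisfied {N : ℕ} (T : Fin N → Bool) (cl : Clause N) : Prop :=
  T cl.l1.1 = cl.l1.2 ∨ T cl.l2.1 = cl.l2.2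

instance {N : ℕ} (T : Fin N → Bool) (cl : Clause N) : Decidable (Clause.satisfied T cl) := by
  unfold Clause.satisfied; infer_instance

/-- The point set of the construction: one point per literal (facility/literal points)
and one point per clause. -/
abbrev Pt (N M : ℕ) := Lit N ⊕ Fin M

/-- The SAT cost `w(B,T)`: total weight of the clauses satisfied by `T`. -/
def satCost {N M : ℕ} (b : Fin M → Clause N) (w : Fin M → ℕ) (T : Fin N → Bool) : ℕ :=
  ∑ m ∈ Finset.univ.filter (fun m => Clause.satisfied T (b m)), w m

/-- The distance function of the constructed MUFL instance. -/
noncomputable def dFL {N M : ℕ} (b : Fin M → Clause N) (w : Fin M → ℕ) (W c : ℝ) :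
    Pt N M → Pt N M → ℝ := fun p q =>
  if p = q then 0
  else
    match p, q with
    | Sum.inl x, Sum.inl y => if x.1 = y.1 then 1 else 2
    | Sum.inl x, Sum.inr m =>
        if Clause.occurs x (b m) then 1 + (w m : ℝ) / W
        else if Clause.occurs (Lit.neg x) (b m) then 1 + c * (w m : ℝ) / W
        else 2
    | Sum.inr m, Sum.inl x =>
        if Clause.occurs x (b m) then 1 + (w m : ℝ) / W
        else if Clause.occurs (Lit.neg x) (b m) then 1 + c * (w m : ℝ) / W
        else 2
    | Sum.inr _, Sum.inr _ => 2

/-- The MUFL cost `φ_FL(C,F,O)` of a set of open facilities `O`: every client connects to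
the nearest open facility (`∞` if no facility is open), plus opening cost `2` per
open facility. -/
noncomputable def phiFL {N M : ℕ} (d : Pt N M → Pt N M → ℝ) (O : Finset (Lit N)) : ℝ≥0∞ :=
  (∑ p : Pt N M, ⨅ o ∈ O, ENNReal.ofReal (d p (Sum.inl o))) + 2 * (O.card : ℝ≥0∞)

/-- A set of open facilities is reasonable if it has size `N` and contains a facility
corresponding to each variable. -/
def ReasonableFL {N : ℕ} (O : Finset (Lit N)) : Prop :=
  O.card = N ∧ ∀ n : Fin N, (n, true) ∈ O ∨ (n, false) ∈ O

/-- The truth assignment `T_O` induced by a set of open facilities: `x_n` is true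
iff the facility `x_n` is open. -/
def assignOf {N : ℕ} (O : Finset (Lit N)) : Fin N → Bool :=
  fun n => decide ((n, true) ∈ O)

/-!
A function that vanishes on the diagonal and takes values between `a` and `2a` elsewhere satisfies
the triangle inequality, because two steps of length at least `a` are never shorter than one of
length at most `2a`. For the distance of the construction `a = 1`: it is at most `2` because
`W ≥ 2 · max w` keeps both `w m / W` and `c * w m / W` at most `1`.
-/

section Distance

variable {α R : Type*} {d : α → α → R} {a : R}

theorem eq_zero_iff_eq_of_forall_ne_le [Zero R] [Preorder R] (ha : 0 < a) (hself : ∀ p, d p p = 0)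
    (hle : ∀ p q, p ≠ q → a ≤ d p q) (p q : α) : d p q = 0 ↔ p = q := by
  constructor
  · contrapose!
    exact fun hpq => (ha.trans_le (hle p q hpq)).ne'
  · rintro rfl
    exact hself p

theorem triangle_of_forall_ne_mem_Icc [AddMonoid R] [Preorder R] [AddLeftMono R]
    [AddRightMono R] (ha : 0 ≤ a) (hself : ∀ p, d p p = 0)
    (hd : ∀ p q, p ≠ q → d p q ∈ Set.Icc a (a + a)) (p q r : α) : d p r ≤ d p q + d q r := by
  rcases eq_or_ne p q with rfl | hpq
  · rw [hself, zero_add]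
  rcases eq_or_ne q r with rfl | hqr
  · rw [hself, add_zero]
  have two_steps : a + a ≤ d p q + d q r := add_le_add (hd p q hpq).1 (hd q r hqr).1
  rcases eq_or_ne p r with rfl | hpr
  · rw [hself]
    exact (add_nonneg ha ha).trans two_steps
  · exact (hd p r hpr).2.trans two_steps

end Distance

section Weights

variable {ι R : Type*} [Fintype ι] [Semiring R] [PartialOrder R] {w : ι → ℕ} {s t : R}

theorem mul_natCast_le_mul_natCast_univ_sup [IsOrderedRing R] (hs : 0 ≤ s) (hts : t ≤ s) (i : ι) :
    t * (w i : R) ≤ s * ((Finset.univ.sup w : ℕ) : R) :=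
  mul_le_mul hts (Nat.mono_cast (Finset.le_sup (Finset.mem_univ i))) (Nat.cast_nonneg _) hs

theorem mul_natCast_univ_sup_pos [IsStrictOrderedRing R] (hs : 0 < s) {i : ι} (hi : 0 < w i) :
    0 < s * ((Finset.univ.sup w : ℕ) : R) :=
  mul_pos hs (Nat.cast_pos.mpr (hi.trans_le (Finset.le_sup (Finset.mem_univ i))))

end Weights

section Construction

variable {N M : ℕ} (b : Fin M → Clause N) (w : Fin M → ℕ) (W c : ℝ)

theorem dFL_self (p : Pt N M) : dFL b w W c p p = 0 :=
  if_pos rfl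

theorem dFL_comm (p q : Pt N M) : dFL b w W c p q = dFL b w W c q p := by
  rcases p with x | m <;> rcases q with y | k <;> simp only [dFL, eq_comm, reduceCtorEq]

variable {w W c}

theorem dFL_inl_inr_mem_Icc (hW : 0 < W) (hc : 0 ≤ c) {m : Fin M} (hwW : (w m : ℝ) ≤ W)
    (hcW : c * w m ≤ W) (x : Lit N) : dFL b w W c (Sum.inl x) (Sum.inr m) ∈ Set.Icc 1 2 := by
  have occurs_offset_nonneg : 0 ≤ (w m : ℝ) / W := by positivity
  have occurs_offset_le_one : (w m : ℝ) / W ≤ 1 := div_le_one_of_le₀ hwW hW.le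
  have neg_offset_nonneg : 0 ≤ c * w m / W := by positivity
  have neg_offset_le_one : c * w m / W ≤ 1 := div_le_one_of_le₀ hcW hW.le
  simp only [dFL, reduceCtorEq, if_false, Set.mem_Icc]
  split_ifs <;> constructor <;> linarith

theorem dFL_mem_Icc_of_ne (hW : 0 < W) (hc : 0 ≤ c) (hwW : ∀ m, (w m : ℝ) ≤ W)
    (hcW : ∀ m, c * w m ≤ W) {p q : Pt N M} (hpq : p ≠ q) :
    dFL b w W c p q ∈ Set.Icc 1 2 := by
  rcases p with x | m <;> rcases q with y | k
  · simp only [dFL, if_neg hpq]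
    split_ifs <;> norm_num
  · exact dFL_inl_inr_mem_Icc b hW hc (hwW k) (hcW k) x
  · rw [dFL_comm]
    exact dFL_inl_inr_mem_Icc b hW hc (hwW m) (hcW m) y
  · simp only [dFL, if_neg hpq]
    norm_num

theorem dFL_isMetric_general (hW : 0 < W) (hc : 0 ≤ c) (hwW : ∀ m, (w m : ℝ) ≤ W)
    (hcW : ∀ m, c * w m ≤ W) :
    (∀ p q : Pt N M, dFL b w W c p q = 0 ↔ p = q) ∧
    (∀ p q : Pt N M, dFL b w W c p q = dFL b w W c q p) ∧
    (∀ p q r : Pt N M, dFL b w W c p r ≤ dFL b w W c p q + dFL b w W c q r) := by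
  have hself : ∀ p, dFL b w W c p p = 0 := dFL_self b w W c
  have hd : ∀ p q, p ≠ q → dFL b w W c p q ∈ Set.Icc 1 (1 + 1) := by
    rw [one_add_one_eq_two]
    exact fun p q hpq => dFL_mem_Icc_of_ne b hW hc hwW hcW hpq
  exact ⟨eq_zero_iff_eq_of_forall_ne_le one_pos hself fun p q hpq => (hd p q hpq).1,
    dFL_comm b w W c, triangle_of_forall_ne_mem_Icc zero_le_one hself hd⟩

end Construction

/-- The distance function of the constructed MUFL instance is a metric on `C ∪ F`. -/
theorem dFL_isMetric {N M : ℕ} (hM : 2 ≤ M) (b : Fin M → Clause N) (w : Fin M → ℕ)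
    (hw : ∀ m, 0 < w m) (c : ℝ) (hc1 : 1 < c) (hc2 : c < 2)
    (W : ℝ) (hW : W = (M : ℝ) * ((Finset.univ.sup w : ℕ) : ℝ)) :
    (∀ p q : Pt N M, dFL b w W c p q = 0 ↔ p = q) ∧
    (∀ p q : Pt N M, dFL b w W c p q = dFL b w W c q p) ∧
    (∀ p q r : Pt N M, dFL b w W c p r ≤ dFL b w W c p q + dFL b w W c q r) := by
  have hM' : (2 : ℝ) ≤ M := mod_cast hM
  have hW_pos : 0 < W :=
    hW ▸ mul_natCast_univ_sup_pos (two_pos.trans_le hM') (hw ⟨0, two_pos.trans_le hM⟩)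
  have hscale (t : ℝ) (ht : t ≤ 2) (m : Fin M) : t * w m ≤ W :=
    hW ▸ mul_natCast_le_mul_natCast_univ_sup (zero_le_two.trans hM') (ht.trans hM') m
  exact dFL_isMetric_general b hW_pos (zero_le_one.trans hc1.le)
    (by simpa only [one_mul] using hscale 1 one_le_two) (hscale c hc2.le)
end

section
/- If O and O' are reasonable solutions of the constructed MUFL instance, then w(B, T_O) < w(B, T_{O'}) if and only if φ_FL(C,F,O) > φ_FL(C,F,O'). -/
open Finset
open scoped ENNReal

/-!
A reasonable solution opens exactly the literals true under its truth assignment. Every literal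
client then pays `0` or `1` according to whether it is true, for a total of `N`, and opening the
facilities costs `2 * N`. A clause of weight `w` finds one of its own literals open, at distance
`1 + w / W`, if it is satisfied, and only their negations, at distance `1 + c * w / W`, otherwise;
no facility of a foreign variable is closer because `c * w ≤ W`. So satisfying the clause saves
`(c - 1) * w / W`, and the total cost is a strictly decreasing affine function of the SAT cost.
-/

theorem biInf_ofReal_eq_of_isLeast {ι : Type*} {s : Set ι} {f : ι → ℝ} {r : ℝ}
    (h : IsLeast (f '' s) r) : ⨅ i ∈ s, ENNReal.ofReal (f i) = ENNReal.ofReal r := by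
  rw [← (ENNReal.ofReal_mono.map_isLeast h).isGLB.sInf_eq, Set.image_image, sInf_image]

variable {N M : ℕ}

theorem Lit.neg_neg (p : Lit N) : p.neg.neg = p := by
  simp [Lit.neg]

/-- The literals true under the assignment `T`: the facilities opened by the reasonable solution
inducing `T`. -/
def trueLits (T : Fin N → Bool) : Finset (Lit N) :=
  univ.filter fun p => T p.1 = p.2

section trueLits

variable {T : Fin N → Bool} {p : Lit N} {cl : Clause N}

theorem mem_trueLits : p ∈ trueLits T ↔ T p.1 = p.2 := by
  simp [trueLits]

theorem neg_mem_trueLits : p.neg ∈ trueLits T ↔ p ∉ trueLits T := by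
  simp [mem_trueLits, Lit.neg, Bool.eq_not]

theorem sum_ite_mem_trueLits {α : Type*} [AddCommMonoid α] (T : Fin N → Bool) (x y : α) :
    ∑ p, (if p ∈ trueLits T then x else y) = N • (x + y) := by
  have sum_polarity (n : Fin N) : ∑ s, (if T n = s then x else y) = x + y := by
    cases T n <;> simp [add_comm]
  simp only [mem_trueLits, Fintype.sum_prod_type, sum_polarity, sum_const, card_univ,
    Fintype.card_fin]

theorem card_trueLits (T : Fin N → Bool) : (trueLits T).card = N := by
  simpa using sum_ite_mem_trueLits T (1 : ℕ) 0

theorem Clause.satisfied_iff_exists_mem_trueLits :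
    cl.satisfied T ↔ ∃ p ∈ trueLits T, Clause.occurs p cl := by
  simp [Clause.satisfied, Clause.occurs, mem_trueLits, and_or_left, exists_or]

theorem Clause.exists_neg_occurs_of_not_satisfied (h : ¬ cl.satisfied T) :
    ∃ p ∈ trueLits T, Clause.occurs p.neg cl := by
  refine ⟨cl.l1.neg, neg_mem_trueLits.2 fun hl => h (Or.inl (mem_trueLits.1 hl)), ?_⟩
  exact Or.inl cl.l1.neg_neg

end trueLits

theorem ReasonableFL.trueLits_assignOf {O : Finset (Lit N)} (hO : ReasonableFL O) :
    trueLits (assignOf O) = O := by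
  refine eq_of_subset_of_card_le (fun p hp => ?_) (by rw [hO.1, card_trueLits])
  obtain ⟨n, _ | _⟩ := p
  · exact (hO.2 n).resolve_left (by simpa [mem_trueLits, assignOf] using hp)
  · simpa [mem_trueLits, assignOf] using hp

section dFL

variable (b : Fin M → Clause N) (w : Fin M → ℕ) (W c : ℝ)

theorem dFL_inl_inl (p q : Lit N) :
    dFL b w W c (Sum.inl p) (Sum.inl q) = if p = q then 0 else if p.1 = q.1 then 1 else 2 := by
  simp [dFL]

theorem dFL_inr_inl (m : Fin M) (p : Lit N) :
    dFL b w W c (Sum.inr m) (Sum.inl p) =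
      if Clause.occurs p (b m) then 1 + (w m : ℝ) / W
      else if Clause.occurs p.neg (b m) then 1 + c * (w m : ℝ) / W
      else 2 := by
  simp [dFL]

theorem isLeast_dFL_inl (T : Fin N → Bool) (p : Lit N) :
    IsLeast ((fun o => dFL b w W c (Sum.inl p) (Sum.inl o)) '' trueLits T)
      (if p ∈ trueLits T then 0 else 1) := by
  simp only [dFL_inl_inl]
  split_ifs with hp
  · refine ⟨⟨p, hp, if_pos rfl⟩, Set.forall_mem_image.2 fun o _ => ?_⟩
    split_ifs <;> norm_num
  · have ne_of_mem : ∀ o ∈ trueLits T, p ≠ o := fun o ho hpo => hp (hpo ▸ ho)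
    have neg_mem : p.neg ∈ trueLits T := neg_mem_trueLits.2 hp
    refine ⟨⟨p.neg, neg_mem, ?_⟩, Set.forall_mem_image.2 fun o ho => ?_⟩
    · simp only [if_neg (ne_of_mem _ neg_mem)]
      exact if_pos rfl
    · rw [if_neg (ne_of_mem o ho)]
      split_ifs <;> norm_num

/-- The connection cost of the clause client `m` when the literals true under `T` are open,
in closed form. -/
noncomputable def clauseConnectionCost (T : Fin N → Bool) (m : Fin M) : ℝ :=
  if (b m).satisfied T then 1 + (w m : ℝ) / W else 1 + c * (w m : ℝ) / W

theorem sum_clauseConnectionCost (T : Fin N → Bool) :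
    ∑ m, clauseConnectionCost b w W c T m =
      ∑ m, (1 + c * (w m : ℝ) / W) - (c - 1) / W * satCost b w T := by
  rw [satCost, sum_filter, Nat.cast_sum, mul_sum, ← sum_sub_distrib]
  refine sum_congr rfl fun m _ => ?_
  rw [clauseConnectionCost]
  split_ifs
  · ring
  · simp

variable {W c} {w}

theorem clauseConnectionCost_nonneg (hW : 0 ≤ W) (hc : 0 ≤ c) (T : Fin N → Bool) (m : Fin M) :
    0 ≤ clauseConnectionCost b w W c T m := by
  unfold clauseConnectionCost
  split_ifs <;> positivity

theorem isLeast_dFL_inr (hW : 0 < W) (hc : 1 ≤ c) (T : Fin N → Bool) {m : Fin M}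
    (hm : c * w m ≤ W) :
    IsLeast ((fun o => dFL b w W c (Sum.inr m) (Sum.inl o)) '' trueLits T)
      (clauseConnectionCost b w W c T m) := by
  have occurs_le_neg_occurs : 1 + (w m : ℝ) / W ≤ 1 + c * (w m : ℝ) / W := by
    gcongr
    exact le_mul_of_one_le_left (Nat.cast_nonneg _) hc
  have neg_occurs_le_two : 1 + c * (w m : ℝ) / W ≤ 2 := by
    linarith [(div_le_one hW).2 hm]
  simp only [dFL_inr_inl, clauseConnectionCost]
  split_ifs with hsat
  · obtain ⟨p, hp, hocc⟩ := Clause.satisfied_iff_exists_mem_trueLits.1 hsat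
    refine ⟨⟨p, hp, if_pos hocc⟩, Set.forall_mem_image.2 fun o _ => ?_⟩
    split_ifs <;> linarith
  · have not_occurs : ∀ o ∈ trueLits T, ¬ Clause.occurs o (b m) := fun o ho hocc =>
      hsat (Clause.satisfied_iff_exists_mem_trueLits.2 ⟨o, ho, hocc⟩)
    obtain ⟨p, hp, hneg⟩ := Clause.exists_neg_occurs_of_not_satisfied hsat
    refine ⟨⟨p, hp, by simp only [if_neg (not_occurs p hp), if_pos hneg]⟩,
      Set.forall_mem_image.2 fun o ho => ?_⟩
    rw [if_neg (not_occurs o ho)]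
    split_ifs <;> linarith

theorem phiFL_trueLits (hW : 0 < W) (hc : 1 ≤ c) (hcW : ∀ m, c * w m ≤ W) (T : Fin N → Bool) :
    phiFL (dFL b w W c) (trueLits T) =
      ENNReal.ofReal (3 * N + ∑ m, clauseConnectionCost b w W c T m) := by
  have lits : ∑ p, ⨅ o ∈ trueLits T, ENNReal.ofReal (dFL b w W c (Sum.inl p) (Sum.inl o)) = N :=
    calc
      _ = ∑ p, ENNReal.ofReal (if p ∈ trueLits T then 0 else 1) :=
          sum_congr rfl fun p _ => biInf_ofReal_eq_of_isLeast (isLeast_dFL_inl b w W c T p)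
      _ = N := by simp [apply_ite ENNReal.ofReal, sum_ite_mem_trueLits]
  have clauses : ∑ m, ⨅ o ∈ trueLits T, ENNReal.ofReal (dFL b w W c (Sum.inr m) (Sum.inl o)) =
      ENNReal.ofReal (∑ m, clauseConnectionCost b w W c T m) := by
    rw [ENNReal.ofReal_sum_of_nonneg fun m _ =>
      clauseConnectionCost_nonneg b hW.le (zero_le_one.trans hc) T m]
    exact sum_congr rfl fun m _ => biInf_ofReal_eq_of_isLeast (isLeast_dFL_inr b hW hc T (hcW m))
  rw [phiFL, Fintype.sum_sum_type, lits, clauses, card_trueLits,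
    ENNReal.ofReal_add (by positivity)
      (sum_nonneg fun m _ => clauseConnectionCost_nonneg b hW.le (zero_le_one.trans hc) T m),
    ENNReal.ofReal_mul zero_le_three, ENNReal.ofReal_natCast, ENNReal.ofReal_ofNat]
  ring

theorem phiFL_trueLits_lt_iff (hW : 0 < W) (hc : 1 < c) (hcW : ∀ m, c * w m ≤ W)
    {T T' : Fin N → Bool} :
    phiFL (dFL b w W c) (trueLits T') < phiFL (dFL b w W c) (trueLits T) ↔
      satCost b w T < satCost b w T' := by
  have cost_nonneg : 0 ≤ 3 * (N : ℝ) + ∑ m, clauseConnectionCost b w W c T' m :=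
    add_nonneg (by positivity) <| sum_nonneg fun m _ =>
      clauseConnectionCost_nonneg b hW.le (zero_le_one.trans hc.le) T' m
  have saving_pos : 0 < (c - 1) / W := div_pos (sub_pos.2 hc) hW
  rw [phiFL_trueLits b hW hc.le hcW, phiFL_trueLits b hW hc.le hcW,
    ENNReal.ofReal_lt_ofReal_iff_of_nonneg cost_nonneg, add_lt_add_iff_left,
    sum_clauseConnectionCost, sum_clauseConnectionCost, sub_lt_sub_iff_left,
    mul_lt_mul_iff_right₀ saving_pos, Nat.cast_lt]

theorem satCost_lt_iff_phiFL_gt_general (hW : 0 < W) (hc : 1 < c) (hcW : ∀ m, c * w m ≤ W)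
    {O O' : Finset (Lit N)} (hO : ReasonableFL O) (hO' : ReasonableFL O') :
    satCost b w (assignOf O) < satCost b w (assignOf O') ↔
      phiFL (dFL b w W c) O' < phiFL (dFL b w W c) O := by
  rw [← phiFL_trueLits_lt_iff b hW hc hcW, hO.trueLits_assignOf, hO'.trueLits_assignOf]

end dFL

/-- For reasonable MUFL solutions, the SAT cost order is reversed by the MUFL
cost order. -/
theorem satCost_lt_iff_phiFL_gt {N M : ℕ} (hM : 2 ≤ M) (b : Fin M → Clause N) (w : Fin M → ℕ)
    (hw : ∀ m, 0 < w m) (c : ℝ) (hc1 : 1 < c) (hc2 : c < 2)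
    (W : ℝ) (hW : W = (M : ℝ) * ((Finset.univ.sup w : ℕ) : ℝ))
    (O O' : Finset (Lit N)) (hO : ReasonableFL O) (hO' : ReasonableFL O') :
    satCost b w (assignOf O) < satCost b w (assignOf O') ↔
      phiFL (dFL b w W c) O' < phiFL (dFL b w W c) O := by
  have hcW (m : Fin M) : c * w m ≤ W := hW ▸ mul_le_mul (hc2.le.trans (mod_cast hM))
    (mod_cast le_sup (f := w) (mem_univ m)) (Nat.cast_nonneg _) (Nat.cast_nonneg _)
  have hW_pos : 0 < W := (mul_pos (zero_lt_one.trans hc1)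
    (mod_cast hw ⟨0, zero_lt_two.trans_le hM⟩)).trans_le (hcW _)
  exact satCost_lt_iff_phiFL_gt_general b hW_pos hc1 hcW hO hO'
end

section
/- If O ⊆ F is locally optimal for the constructed MUFL instance with respect to the single-swap neighbourhood (i.e., no solution obtained from O by opening one closed facility, closing one open facility, or swapping one open facility for one closed facility has strictly smaller cost φ_FL), then O is reasonable. -/
open Finset
open scoped ENNReal

/-! If both literals of a variable are open, close one of them. Its own client moves from distance
`0` to distance `1`, and each clause client `m` pays at most `|c - 1| * w m / W` more by going to
the negation, so the connection cost grows by less than `2`, the opening cost saved. If neither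
literal of a variable is open, open one of them: every open facility is at distance `2` from both
literals, so their clients save `2 + 1 = 3`, more than the opening cost `2`. Hence at a local
optimum exactly one literal of each variable is open. -/

section ConnCost

variable {ι κ : Type*} [Fintype ι]

/-- The connection cost of the open facilities `O`, when serving client `p` from facility `o` costs
`d p o`; it is `∞` when there is a client and no facility is open. -/
noncomputable def connCost (d : ι → κ → ℝ≥0∞) (O : Finset κ) : ℝ≥0∞ :=
  ∑ p, ⨅ o ∈ O, d p o

theorem connCost_ne_top {d : ι → κ → ℝ≥0∞} {O : Finset κ} {o : κ} (ho : o ∈ O)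
    (hd : ∀ p, d p o ≠ ∞) : connCost d O ≠ ∞ :=
  ENNReal.sum_ne_top.2 fun p _ => ne_top_of_le_ne_top (hd p) (iInf₂_le o ho)

variable [DecidableEq κ]

theorem connCost_insert_add_sum_le {d : ι → κ → ℝ≥0∞} {O : Finset κ} {a : κ} {S : Finset ι}
    {s : ι → ℝ≥0∞} (h : ∀ p ∈ S, ∀ o ∈ O, d p a + s p ≤ d p o) :
    connCost d (insert a O) + ∑ p ∈ S, s p ≤ connCost d O := by
  classical
  rw [connCost, connCost, ← Finset.sum_add_sum_compl S, ← Finset.sum_add_sum_compl S,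
    add_right_comm, ← Finset.sum_add_distrib]
  refine add_le_add (Finset.sum_le_sum fun p hp => le_iInf₂ fun o ho => ?_)
    (Finset.sum_le_sum fun p _ => biInf_mono fun o ho => Finset.mem_insert_of_mem ho)
  calc (⨅ o' ∈ insert a O, d p o') + s p ≤ d p a + s p := by
        gcongr; exact iInf₂_le a (Finset.mem_insert_self a O)
    _ ≤ d p o := h p hp o ho

theorem connCost_erase_le_add_sum {d : ι → κ → ℝ≥0∞} {O : Finset κ} {a a' : κ} {δ : ι → ℝ≥0∞}
    (ha' : a' ∈ O.erase a) (h : ∀ p, d p a' ≤ d p a + δ p) :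
    connCost d (O.erase a) ≤ connCost d O + ∑ p, δ p := by
  rw [connCost, connCost, ← Finset.sum_add_distrib]
  refine Finset.sum_le_sum fun p _ => ?_
  simp only [ENNReal.iInf_add]
  refine le_iInf₂ fun o ho => ?_
  obtain rfl | hoa := eq_or_ne o a
  · exact (iInf₂_le a' ha').trans (h p)
  · exact (iInf₂_le o (Finset.mem_erase.2 ⟨hoa, ho⟩)).trans le_self_add

end ConnCost

section FacilityCost

variable {N M : ℕ} (d : Pt N M → Pt N M → ℝ)

/-- The distances from clients to facilities, with values in `ℝ≥0∞` as they enter `phiFL`. -/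
noncomputable def facilityDist (p : Pt N M) (o : Lit N) : ℝ≥0∞ :=
  ENNReal.ofReal (d p (Sum.inl o))

theorem phiFL_eq_connCost_add (O : Finset (Lit N)) :
    phiFL d O = connCost (facilityDist d) O + 2 * (O.card : ℝ≥0∞) :=
  rfl

theorem connCost_facilityDist_ne_top {O : Finset (Lit N)} (hO : O.Nonempty) :
    connCost (facilityDist d) O ≠ ∞ :=
  connCost_ne_top hO.choose_spec fun _ => ENNReal.ofReal_ne_top

theorem phiFL_insert_lt_iff {O : Finset (Lit N)} {a : Lit N} (ha : a ∉ O) :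
    phiFL d (insert a O) < phiFL d O ↔
      connCost (facilityDist d) (insert a O) + 2 < connCost (facilityDist d) O := by
  have hcard : 2 * (O.card : ℝ≥0∞) ≠ ∞ := by finiteness
  rw [phiFL_eq_connCost_add, phiFL_eq_connCost_add, Finset.card_insert_of_notMem ha,
    Nat.cast_succ, mul_add_one, add_comm (2 * _), ← add_assoc,
    ENNReal.add_lt_add_iff_right hcard]

theorem phiFL_erase_lt_iff {O : Finset (Lit N)} {a : Lit N} (ha : a ∈ O) :
    phiFL d (O.erase a) < phiFL d O ↔
      connCost (facilityDist d) (O.erase a) < connCost (facilityDist d) O + 2 := by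
  have hcard : 2 * ((O.erase a).card : ℝ≥0∞) ≠ ∞ := by finiteness
  rw [phiFL_eq_connCost_add, phiFL_eq_connCost_add, ← Finset.card_erase_add_one ha,
    Nat.cast_succ, mul_add_one, add_comm (2 * _) 2, ← add_assoc,
    ENNReal.add_lt_add_iff_right hcard]

end FacilityCost

namespace Lit

variable {N : ℕ}

theorem neg_fst (a : Lit N) : a.neg.1 = a.1 :=
  rfl

theorem neg_neg_s3 (a : Lit N) : a.neg.neg = a := by
  simp [neg]

theorem neg_ne_self (a : Lit N) : a.neg ≠ a := by
  simp [neg, Prod.ext_iff]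

theorem eq_neg_of_fst_eq_of_ne {a a' : Lit N} (hvar : a'.1 = a.1) (hne : a' ≠ a) : a' = a.neg :=
  Prod.ext hvar (Bool.eq_not_of_ne fun hsign => hne (Prod.ext hvar hsign))

end Lit

theorem reasonableFL_of_forall_exists_of_forall_neg_notMem {N : ℕ} {O : Finset (Lit N)}
    (hcover : ∀ n, ∃ a ∈ O, a.1 = n) (hneg : ∀ a ∈ O, a.neg ∉ O) : ReasonableFL O := by
  have hinj : Set.InjOn Prod.fst (O : Set (Lit N)) := fun a ha a' ha' hvar =>
    of_not_not fun hne => hneg a' ha' (Lit.eq_neg_of_fst_eq_of_ne hvar hne ▸ ha)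
  have himage : O.image Prod.fst = Finset.univ := by
    ext n
    simpa using hcover n
  refine ⟨?_, fun n => ?_⟩
  · rw [← Finset.card_image_of_injOn hinj, himage, Finset.card_univ, Fintype.card_fin]
  · obtain ⟨⟨_, _ | _⟩, ha, rfl⟩ := hcover n
    · exact Or.inr ha
    · exact Or.inl ha

section Distance

variable {N M : ℕ} (b : Fin M → Clause N) (w : Fin M → ℕ) (W c : ℝ)

theorem dFL_inl_neg_inl (a : Lit N) : dFL b w W c (Sum.inl a.neg) (Sum.inl a) = 1 := by
  simp [dFL, Lit.neg_ne_self, Lit.neg_fst]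

theorem dFL_inl_inl_of_fst_ne {x y : Lit N} (h : x.1 ≠ y.1) :
    dFL b w W c (Sum.inl x) (Sum.inl y) = 2 := by
  simp [dFL, h, ne_of_apply_ne Prod.fst h]

/-- A bound on the additional distance of each client when it is redirected from the facility `a`
to `a.neg`; a clause client has distances `1 + w m / W` and `1 + c * w m / W` to the two literals of
each of its variables. -/
noncomputable def negDetour (a : Lit N) : Pt N M → ℝ :=
  Sum.elim (fun x => if x = a then 1 else 0) fun m => |c - 1| * (w m / W)

theorem dFL_inl_neg_le (a x : Lit N) :
    dFL b w W c (Sum.inl x) (Sum.inl a.neg) ≤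
      dFL b w W c (Sum.inl x) (Sum.inl a) + (if x = a then 1 else 0) := by
  obtain rfl | hx := eq_or_ne x a
  · simp [dFL, (Lit.neg_ne_self x).symm, Lit.neg_fst]
  · obtain rfl | hx' := eq_or_ne x a.neg
    · simp [dFL_self, dFL_inl_neg_inl, Lit.neg_ne_self]
    · have hvar : x.1 ≠ a.1 := fun h => hx' (Lit.eq_neg_of_fst_eq_of_ne h hx)
      have hvar' : x.1 ≠ a.neg.1 := hvar
      simp [dFL_inl_inl_of_fst_ne, hx, hvar, hvar']

variable {W}

theorem dFL_inr_neg_le (hW : 0 ≤ W) (a : Lit N) (m : Fin M) :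
    dFL b w W c (Sum.inr m) (Sum.inl a.neg) ≤
      dFL b w W c (Sum.inr m) (Sum.inl a) + |c - 1| * (w m / W) := by
  have hratio : 0 ≤ (w m : ℝ) / W := by positivity
  have hdetour : |c * (w m / W) - w m / W| = |c - 1| * (w m / W) := by
    rw [← sub_one_mul, abs_mul, abs_of_nonneg hratio]
  have := abs_le.1 hdetour.le
  simp only [dFL, Lit.neg_neg_s3, reduceCtorEq, if_false, mul_div_assoc]
  split_ifs <;> linarith

theorem dFL_neg_le_add_negDetour (hW : 0 ≤ W) (a : Lit N) (p : Pt N M) :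
    dFL b w W c p (Sum.inl a.neg) ≤ dFL b w W c p (Sum.inl a) + negDetour w W c a p :=
  match p with
  | Sum.inl x => dFL_inl_neg_le b w W c a x
  | Sum.inr m => dFL_inr_neg_le b w c hW a m

theorem negDetour_nonneg (hW : 0 ≤ W) (a : Lit N) (p : Pt N M) : 0 ≤ negDetour w W c a p := by
  rcases p with x | m
  · simp only [negDetour, Sum.elim_inl]
    split_ifs <;> norm_num
  · exact mul_nonneg (abs_nonneg _) (by positivity)

variable {w c}

theorem sum_negDetour_lt_two (hW : 0 < W) (hcW : |c - 1| * ∑ m, (w m : ℝ) < W) (a : Lit N) :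
    ∑ p, negDetour w W c a p < 2 := by
  have hclauses : ∑ m, |c - 1| * ((w m : ℝ) / W) < 1 := by
    rwa [← Finset.mul_sum, ← Finset.sum_div, ← mul_div_assoc, div_lt_one hW]
  rw [Fintype.sum_sum_type]
  simp only [negDetour, Sum.elim_inl, Sum.elim_inr, Finset.sum_ite_eq', Finset.mem_univ, if_true]
  linarith

end Distance

section Moves

variable {N M : ℕ} (b : Fin M → Clause N) {O : Finset (Lit N)} {a : Lit N}

theorem phiFL_dFL_insert_lt (w : Fin M → ℕ) (W c : ℝ) (ha : ∀ o ∈ O, o.1 ≠ a.1) :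
    phiFL (dFL b w W c) (insert a O) < phiFL (dFL b w W c) O := by
  let d := facilityDist (dFL b w W c)
  have hself : d (Sum.inl a) a = 0 := by simp [d, facilityDist, dFL_self]
  have hneg : d (Sum.inl a.neg) a = 1 := by simp [d, facilityDist, dFL_inl_neg_inl]
  have hfar : ∀ x : Lit N, x.1 = a.1 → ∀ o ∈ O, d (Sum.inl x) o = 2 := fun x hx o ho => by
    simp [d, facilityDist, dFL_inl_inl_of_fst_ne b w W c (hx.trans_ne (ha o ho).symm)]
  let saving : Pt N M → ℝ≥0∞ := fun p => if p = Sum.inl a then 2 else 1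
  have hsaving : ∀ p ∈ ({Sum.inl a, Sum.inl a.neg} : Finset (Pt N M)), ∀ o ∈ O,
      d p a + saving p ≤ d p o := by
    simp only [Finset.mem_insert, Finset.mem_singleton, forall_eq_or_imp, forall_eq]
    refine ⟨fun o ho => ?_, fun o ho => ?_⟩
    · simp [saving, hself, hfar a rfl o ho]
    · simp [saving, hneg, hfar a.neg rfl o ho, Lit.neg_ne_self, one_add_one_eq_two]
  have hsum : ∑ p ∈ ({Sum.inl a, Sum.inl a.neg} : Finset (Pt N M)), saving p = 3 := by
    rw [Finset.sum_pair (by simp [(Lit.neg_ne_self a).symm])]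
    simp only [saving, if_true, Sum.inl.injEq, Lit.neg_ne_self, if_false]
    norm_num
  refine (phiFL_insert_lt_iff _ fun haO => ha a haO rfl).2 ?_
  calc connCost d (insert a O) + 2 < connCost d (insert a O) + 3 :=
        ENNReal.add_lt_add_left
          (connCost_facilityDist_ne_top _ (Finset.insert_nonempty a O)) (by norm_num)
    _ ≤ connCost d O := hsum ▸ connCost_insert_add_sum_le hsaving

theorem phiFL_dFL_erase_lt {w : Fin M → ℕ} {W c : ℝ} (hcW : |c - 1| * ∑ m, (w m : ℝ) < W)
    (ha : a ∈ O) (hneg : a.neg ∈ O) :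
    phiFL (dFL b w W c) (O.erase a) < phiFL (dFL b w W c) O := by
  have hW : 0 < W := (by positivity : 0 ≤ |c - 1| * ∑ m, (w m : ℝ)).trans_lt hcW
  let d := facilityDist (dFL b w W c)
  let δ : Pt N M → ℝ≥0∞ := fun p => ENNReal.ofReal (negDetour w W c a p)
  have hdetour : ∀ p, d p a.neg ≤ d p a + δ p := fun p =>
    (ENNReal.ofReal_le_ofReal (dFL_neg_le_add_negDetour b w c hW.le a p)).trans
      ENNReal.ofReal_add_le
  have hsum : ∑ p, δ p < 2 := by
    rw [← ENNReal.ofReal_sum_of_nonneg fun p _ => negDetour_nonneg w c hW.le a p,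
      ENNReal.ofReal_lt_ofNat]
    exact sum_negDetour_lt_two hW hcW a
  refine (phiFL_erase_lt_iff _ ha).2 ?_
  calc connCost d (O.erase a) ≤ connCost d O + ∑ p, δ p :=
        connCost_erase_le_add_sum (Finset.mem_erase.2 ⟨Lit.neg_ne_self a, hneg⟩) hdetour
    _ < connCost d O + 2 :=
        ENNReal.add_lt_add_left (connCost_facilityDist_ne_top _ ⟨a, ha⟩) hsum

end Moves

theorem mul_sum_lt_card_mul_sup {ι : Type*} [Fintype ι] [Nonempty ι] {w : ι → ℕ}
    (hw : ∀ i, 0 < w i) {r : ℝ} (hr : r < 1) :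
    r * ∑ i, (w i : ℝ) < Fintype.card ι * (Finset.univ.sup w : ℕ) := by
  have hpos : 0 < ∑ i, (w i : ℝ) :=
    Finset.sum_pos (fun i _ => Nat.cast_pos.2 (hw i)) Finset.univ_nonempty
  have hsum : ∑ i, w i ≤ Fintype.card ι * Finset.univ.sup w :=
    Finset.sum_le_card_nsmul _ _ _ fun _ hi => Finset.le_sup (f := w) hi
  calc r * ∑ i, (w i : ℝ) < ∑ i, (w i : ℝ) := mul_lt_of_lt_one_left hpos hr
    _ ≤ Fintype.card ι * (Finset.univ.sup w : ℕ) := mod_cast hsum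

theorem reasonable_of_localOpt_general {N M : ℕ} (b : Fin M → Clause N) (w : Fin M → ℕ)
    {W c : ℝ} (hcW : |c - 1| * ∑ m, (w m : ℝ) < W) (O : Finset (Lit N))
    (hopen : ∀ a ∉ O, ¬ phiFL (dFL b w W c) (insert a O) < phiFL (dFL b w W c) O)
    (hclose : ∀ a ∈ O, ¬ phiFL (dFL b w W c) (O.erase a) < phiFL (dFL b w W c) O) :
    ReasonableFL O := by
  refine reasonableFL_of_forall_exists_of_forall_neg_notMem (fun n => ?_) fun a ha hneg =>
    hclose a ha (phiFL_dFL_erase_lt b hcW ha hneg)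
  by_contra! huncovered
  exact hopen (n, true) (fun hmem => huncovered _ hmem rfl)
    (phiFL_dFL_insert_lt b w W c huncovered)

/-- Every solution locally optimal for the single-swap neighbourhood (opening a
facility, closing a facility, or swapping two facilities) is reasonable. -/
theorem reasonable_of_localOpt {N M : ℕ} (hM : 2 ≤ M) (b : Fin M → Clause N) (w : Fin M → ℕ)
    (hw : ∀ m, 0 < w m) (c : ℝ) (hc1 : 1 < c) (hc2 : c < 2)
    (W : ℝ) (hW : W = (M : ℝ) * ((Finset.univ.sup w : ℕ) : ℝ))
    (O : Finset (Lit N))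
    (hopen : ∀ a ∉ O, ¬ phiFL (dFL b w W c) (insert a O) < phiFL (dFL b w W c) O)
    (hclose : ∀ a ∈ O, ¬ phiFL (dFL b w W c) (O.erase a) < phiFL (dFL b w W c) O)
    (hswap : ∀ a ∉ O, ∀ r ∈ O,
      ¬ phiFL (dFL b w W c) (insert a (O.erase r)) < phiFL (dFL b w W c) O) :
    ReasonableFL O := by
  have : Nonempty (Fin M) := ⟨⟨0, by omega⟩⟩
  have hr : |c - 1| < 1 := abs_lt.2 ⟨by linarith, by linarith⟩
  have hcW : |c - 1| * ∑ m, (w m : ℝ) < W := by simpa [hW] using mul_sum_lt_card_mul_sup hw hr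
  exact reasonable_of_localOpt_general b w hcW O hopen hclose
end

section
/- If O ⊆ C with |O| = N is locally optimal for the constructed DKM instance with respect to the single-swap neighbourhood (i.e., no set obtained from O by exchanging one element of O for one element of C \ O has strictly smaller cost φ_KM), then O is reasonable. -/
open Finset
open scoped ENNReal

/-- The distance function of the constructed DKM instance. -/
noncomputable def dKM {N M : ℕ} (b : Fin M → Clause N) (w : Fin M → ℕ) (W c ε : ℝ) :
    Pt N M → Pt N M → ℝ := fun p q =>
  if p = q then 0
  else
    match p, q with
    | Sum.inl x, Sum.inl y => if x.1 = y.1 then 1 else 1 + 2 * ε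
    | Sum.inl x, Sum.inr m =>
        if Clause.occurs x (b m) then 1 + ε * (3 / 2 + (w m : ℝ) / (2 * W))
        else if Clause.occurs (Lit.neg x) (b m) then 1 + ε * (3 / 2 + c * (w m : ℝ) / (2 * W))
        else 1 + 2 * ε
    | Sum.inr m, Sum.inl x =>
        if Clause.occurs x (b m) then 1 + ε * (3 / 2 + (w m : ℝ) / (2 * W))
        else if Clause.occurs (Lit.neg x) (b m) then 1 + ε * (3 / 2 + c * (w m : ℝ) / (2 * W))
        else 1 + 2 * ε
    | Sum.inr _, Sum.inr _ => 1 + 2 * ε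

/-- The K-means cost `φ_KM(C,O)` of a set of open locations `O ⊆ C`: every point connects
to the nearest open location (`∞` if `O = ∅`). -/
noncomputable def phiKM {N M : ℕ} (d : Pt N M → Pt N M → ℝ) (O : Finset (Pt N M)) : ℝ≥0∞ :=
  ∑ p : Pt N M, ⨅ o ∈ O, ENNReal.ofReal (d p o)

/-- A set `O ⊆ C` is reasonable if it consists of literal points only, has size `N`,
and contains a point corresponding to each variable. -/
def ReasonableKM {N M : ℕ} (O : Finset (Pt N M)) : Prop :=
  (∀ p ∈ O, ∃ l : Lit N, p = Sum.inl l) ∧ O.card = N ∧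
    ∀ n : Fin N, Sum.inl (n, true) ∈ O ∨ Sum.inl (n, false) ∈ O

/-- The truth assignment `T_O` induced by a set `O ⊆ C`: `x_n` is true iff the point
`x_n` is in `O`. -/
def assignOfKM {N M : ℕ} (O : Finset (Pt N M)) : Fin N → Bool :=
  fun n => decide (Sum.inl (n, true) ∈ O)

/-! If no literal of a variable `n` is open, both points of `n` pay at least `1 + 3ε/2`. Opening one
of them brings their costs down to `0` and at most `1`, a gain of `1 + 3ε` that the closed point of
a swap must make up for.

An open clause point cannot. If one of its variables is uncovered, open the literal that occurs in
the clause: the clause point then pays less than `1 + 2ε`, and besides it only the two literals of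
its other variable can lose, at most `ε / 2` each. If both its variables are covered, closing it
costs at most `1 + 2ε` in total. One of two open literals of the same variable cannot either: it
pays `1` itself, and the clauses lose at most the total gap between their true and false literals,
which is at most `ε / 2`. By counting, a set of `N` points that leaves a variable uncovered contains
a point of one of these two kinds. -/

/-- The set `O` covers the variable `n` if one of the two literal points of `n` is in `O`. -/
def CoversVar {N M : ℕ} (O : Finset (Pt N M)) (n : Fin N) : Prop :=
  ∃ s : Bool, Sum.inl (n, s) ∈ O

/-- Local optimality with respect to the single-swap neighbourhood. -/
def IsSwapOptimal {N M : ℕ} (d : Pt N M → Pt N M → ℝ) (O : Finset (Pt N M)) : Prop :=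
  ∀ p ∈ O, ∀ q : Pt N M, q ∉ O → ¬ phiKM d (insert q (O.erase p)) < phiKM d O

/-- The clause `cl` contains a literal, of either polarity, of the variable `n`. -/
def Clause.Mentions {N : ℕ} (cl : Clause N) (n : Fin N) : Prop :=
  n = cl.l1.1 ∨ n = cl.l2.1

/-- The properties of the distance of the DKM instance on which the swap argument rests. In
`d p o` the point `p` is served by the open point `o`; no symmetry is assumed. The number `δ m`
bounds the extra cost of serving the clause `m` by one literal of a variable instead of the
other. -/
structure IsReductionDist {N M : ℕ} (b : Fin M → Clause N) (ε : ℝ) (δ : Fin M → ℝ)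
    (d : Pt N M → Pt N M → ℝ) : Prop where
  eps_pos : 0 < ε
  self_eq_zero : ∀ p, d p p = 0
  one_le : ∀ {p q}, p ≠ q → 1 ≤ d p q
  le_max : ∀ p q, d p q ≤ 1 + 2 * ε
  lit_lit_le : ∀ {x y : Lit N}, x.1 = y.1 → d (Sum.inl x) (Sum.inl y) ≤ 1
  le_lit_lit : ∀ {x y : Lit N}, x.1 ≠ y.1 → 1 + 2 * ε ≤ d (Sum.inl x) (Sum.inl y)
  le_clause_clause : ∀ {m m' : Fin M}, m ≠ m' → 1 + 2 * ε ≤ d (Sum.inr m) (Sum.inr m')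
  le_lit_clause : ∀ (x : Lit N) (m : Fin M), 1 + 3 / 2 * ε ≤ d (Sum.inl x) (Sum.inr m)
  le_lit_clause_of_not_mentions : ∀ {x : Lit N} {m : Fin M}, ¬ (b m).Mentions x.1 →
    1 + 2 * ε ≤ d (Sum.inl x) (Sum.inr m)
  clause_lit_lt : ∀ {x : Lit N} {m : Fin M}, Clause.occurs x (b m) →
    d (Sum.inr m) (Sum.inl x) < 1 + 2 * ε
  clause_lit_le_add : ∀ {x y : Lit N} (m : Fin M), x.1 = y.1 →
    d (Sum.inr m) (Sum.inl x) ≤ d (Sum.inr m) (Sum.inl y) + δ m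
  gap_nonneg : ∀ m, 0 ≤ δ m
  sum_gap_lt : ∑ m, δ m < 3 * ε

section

variable {N M : ℕ} {b : Fin M → Clause N} {w : Fin M → ℕ} {W c ε : ℝ} {δ : Fin M → ℝ}
  {d : Pt N M → Pt N M → ℝ} {O O' : Finset (Pt N M)}

theorem phiKM_eq_ofReal_sum_inf' (hd : ∀ p q, 0 ≤ d p q) (hO : O.Nonempty) :
    phiKM d O = ENNReal.ofReal (∑ p, O.inf' hO (d p)) := by
  unfold phiKM
  rw [ENNReal.ofReal_sum_of_nonneg fun p _ ↦ Finset.le_inf' _ _ fun o _ ↦ hd p o]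
  refine Finset.sum_congr rfl fun p _ ↦ le_antisymm ?_ ?_
  · obtain ⟨o, ho, h⟩ := Finset.exists_mem_eq_inf' hO (d p)
    exact h ▸ iInf₂_le o ho
  · exact le_iInf₂ fun o ho ↦ ENNReal.ofReal_le_ofReal (Finset.inf'_le _ ho)

theorem phiKM_lt_of_forall_exists_le_add (hd : ∀ p q, 0 ≤ d p q) (hO : O.Nonempty)
    (hO' : O'.Nonempty) {g : Pt N M → ℝ}
    (h : ∀ p, ∀ o ∈ O, ∃ o' ∈ O', d p o' ≤ d p o + g p) (hg : ∑ p, g p < 0) :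
    phiKM d O' < phiKM d O := by
  have h_nonneg : 0 ≤ ∑ p, O'.inf' hO' (d p) :=
    Finset.sum_nonneg fun p _ ↦ Finset.le_inf' _ _ fun o _ ↦ hd p o
  rw [phiKM_eq_ofReal_sum_inf' hd hO, phiKM_eq_ofReal_sum_inf' hd hO',
    ENNReal.ofReal_lt_ofReal_iff_of_nonneg h_nonneg]
  calc ∑ p, O'.inf' hO' (d p) ≤ ∑ p, (O.inf' hO (d p) + g p) := by
        refine Finset.sum_le_sum fun p _ ↦ ?_
        obtain ⟨o, ho, h_min⟩ := Finset.exists_mem_eq_inf' hO (d p)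
        obtain ⟨o', ho', h_le⟩ := h p o ho
        exact h_min ▸ (Finset.inf'_le _ ho').trans h_le
    _ = ∑ p, O.inf' hO (d p) + ∑ p, g p := Finset.sum_add_distrib
    _ < ∑ p, O.inf' hO (d p) := by linarith

theorem Clause.Mentions.exists_occurs {cl : Clause N} {n : Fin N} (h : cl.Mentions n) :
    ∃ s n', Clause.occurs (n, s) cl ∧ ∀ k, cl.Mentions k → k = n ∨ k = n' := by
  rcases h with rfl | rfl
  · exact ⟨cl.l1.2, cl.l2.1, Or.inl rfl, fun _ hk ↦ hk⟩
  · exact ⟨cl.l2.2, cl.l1.1, Or.inr rfl, fun _ hk ↦ hk.symm⟩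

theorem Clause.mentions_iff_occurs_or_occurs_neg {cl : Clause N} {x : Lit N} :
    cl.Mentions x.1 ↔ Clause.occurs x cl ∨ Clause.occurs (Lit.neg x) cl := by
  have same_var_iff (l : Lit N) : x.1 = l.1 ↔ x = l ∨ Lit.neg x = l := by
    obtain ⟨n, s⟩ := x
    obtain ⟨k, t⟩ := l
    cases s <;> cases t <;> simp [Lit.neg]
  simp only [Clause.Mentions, Clause.occurs, same_var_iff]
  tauto

theorem sum_lit_ite_var_eq {R : Type*} [NonAssocSemiring R] (n : Fin N) (a : R) :
    ∑ z : Lit N, (if z.1 = n then a else 0) = 2 * a := by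
  simp [Fintype.sum_prod_type, two_mul, Finset.sum_add_distrib]

theorem inr_notMem_of_forall_coversVar (hO : ∀ n, CoversVar O n) (hcard : O.card ≤ N)
    (m : Fin M) : Sum.inr m ∉ O := by
  intro hm
  have h_image : O.toLeft.image Prod.fst = univ := by
    refine Finset.eq_univ_of_forall fun n ↦ ?_
    obtain ⟨s, hs⟩ := hO n
    exact Finset.mem_image_of_mem Prod.fst (Finset.mem_toLeft.2 hs)
  have h_left : N ≤ O.toLeft.card := by
    simpa [h_image] using O.toLeft.card_image_le (f := Prod.fst)
  have h_right : 0 < O.toRight.card := Finset.card_pos.2 ⟨m, Finset.mem_toRight.2 hm⟩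
  have h_sum := O.card_toLeft_add_card_toRight
  omega

theorem exists_two_lits_of_not_coversVar (hcl : ∀ m, Sum.inr m ∉ O) (hcard : N ≤ O.card)
    {n : Fin N} (hn : ¬ CoversVar O n) :
    ∃ x y : Lit N, Sum.inl x ∈ O ∧ Sum.inl y ∈ O ∧ x ≠ y ∧ x.1 = y.1 := by
  have h_right : O.toRight = ∅ :=
    Finset.eq_empty_of_forall_notMem fun m hm ↦ hcl m (Finset.mem_toRight.1 hm)
  have h_lt : (univ.erase n).card < O.toLeft.card := by
    have h_sum := O.card_toLeft_add_card_toRight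
    rw [h_right, Finset.card_empty] at h_sum
    rw [Finset.card_erase_of_mem (Finset.mem_univ n), Finset.card_fin]
    have := n.pos
    omega
  have h_maps : Set.MapsTo Prod.fst (O.toLeft : Set (Lit N)) (univ.erase n : Finset (Fin N)) := by
    rintro ⟨k, s⟩ hk
    refine Finset.mem_coe.2 (Finset.mem_erase.2 ⟨?_, Finset.mem_univ _⟩)
    rintro rfl
    exact hn ⟨s, Finset.mem_toLeft.1 hk⟩
  obtain ⟨x, hx, y, hy, hne, hxy⟩ :=
    Finset.exists_ne_map_eq_of_card_lt_of_maps_to h_lt h_maps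
  exact ⟨x, y, Finset.mem_toLeft.1 hx, Finset.mem_toLeft.1 hy, hne, hxy⟩

namespace IsReductionDist

theorem nonneg (hd : IsReductionDist b ε δ d) (p q : Pt N M) : 0 ≤ d p q := by
  rcases eq_or_ne p q with rfl | h
  · exact (hd.self_eq_zero p).ge
  · exact zero_le_one.trans (hd.one_le h)

theorem le_of_not_coversVar (hd : IsReductionDist b ε δ d) {z : Lit N}
    (hz : ¬ CoversVar O z.1) {o : Pt N M} (ho : o ∈ O) : 1 + 3 / 2 * ε ≤ d (Sum.inl z) o := by
  rcases o with y | m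
  · have hzy : z.1 ≠ y.1 := fun h ↦ hz ⟨y.2, by rwa [h]⟩
    linarith [hd.le_lit_lit hzy, hd.eps_pos]
  · exact hd.le_lit_clause z m

theorem le_sum_of_reroute (hd : IsReductionDist b ε δ d) (hO : IsSwapOptimal d O)
    {r : Pt N M} (hr : r ∈ O) {x : Lit N} (hx : ¬ CoversVar O x.1)
    {e : Lit N → ℝ} {f : Fin M → ℝ} (he : ∀ z, 0 ≤ e z) (hf : ∀ m, 0 ≤ f m)
    (hlit : ∀ z : Lit N, z.1 ≠ x.1 →
      ∃ o ∈ insert (Sum.inl x) (O.erase r), d (Sum.inl z) o ≤ d (Sum.inl z) r + e z)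
    (hclause : ∀ m,
      ∃ o ∈ insert (Sum.inl x) (O.erase r), d (Sum.inr m) o ≤ d (Sum.inr m) r + f m) :
    1 + 3 * ε ≤ ∑ z, e z + ∑ m, f m := by
  by_contra! h_small
  let gain (z : Lit N) : ℝ := (if z.1 = x.1 then 3 / 2 * ε else 0) + if z = x then 1 else 0
  have sum_gain : ∑ z, gain z = 1 + 3 * ε := by
    simp only [gain, Finset.sum_add_distrib, sum_lit_ite_var_eq, Finset.sum_ite_eq',
      Finset.mem_univ, if_true]
    ring
  have keep_or_reroute {p : Pt N M} {a : ℝ} (ha : 0 ≤ a)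
      (h : ∃ o ∈ insert (Sum.inl x) (O.erase r), d p o ≤ d p r + a) (o : Pt N M) (ho : o ∈ O) :
      ∃ o' ∈ insert (Sum.inl x) (O.erase r), d p o' ≤ d p o + a := by
    rcases eq_or_ne o r with rfl | hor
    · exact h
    · exact ⟨o, Finset.mem_insert_of_mem (Finset.mem_erase.2 ⟨hor, ho⟩), by linarith⟩
  refine hO r hr (Sum.inl x) (fun h ↦ hx ⟨x.2, h⟩) (phiKM_lt_of_forall_exists_le_add hd.nonneg
    ⟨r, hr⟩ (Finset.insert_nonempty _ _) (g := Sum.elim (fun z ↦ e z - gain z) f) ?_ ?_)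
  · rintro (z | m) o ho
    · by_cases hz : z.1 = x.1
      · refine ⟨Sum.inl x, Finset.mem_insert_self _ _, ?_⟩
        have h_old := hd.le_of_not_coversVar (hz ▸ hx) ho
        have h_new : d (Sum.inl z) (Sum.inl x) ≤ if z = x then 0 else 1 := by
          split_ifs with hzx
          · exact hzx ▸ (hd.self_eq_zero _).le
          · exact hd.lit_lit_le hz
        have := he z
        simp only [Sum.elim_inl, gain, if_pos hz]
        split_ifs at h_new ⊢ <;> linarith
      · have h_gain : gain z = 0 := by simp [gain, hz, ne_of_apply_ne Prod.fst hz]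
        simpa [h_gain] using keep_or_reroute (he z) (hlit z hz) o ho
    · exact keep_or_reroute (hf m) (hclause m) o ho
  · simp only [Fintype.sum_sum_type, Sum.elim_inl, Sum.elim_inr, Finset.sum_sub_distrib, sum_gain]
    linarith

theorem coversVar_of_mentions (hd : IsReductionDist b ε δ d) (hO : IsSwapOptimal d O)
    {m : Fin M} (hm : Sum.inr m ∈ O) {n : Fin N} (hn : (b m).Mentions n) : CoversVar O n := by
  by_contra h_unc
  have hε := hd.eps_pos
  obtain ⟨s, n', h_occ, h_vars⟩ := hn.exists_occurs
  let e (z : Lit N) : ℝ := if z.1 = n' then ε / 2 else 0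
  let f (m' : Fin M) : ℝ := if m' = m then d (Sum.inr m) (Sum.inl (n, s)) else 0
  have he (z) : 0 ≤ e z := by dsimp only [e]; split_ifs <;> linarith
  have hf (m') : 0 ≤ f m' := by
    dsimp only [f]; split_ifs; exacts [hd.nonneg _ _, le_rfl]
  have h_sum := hd.le_sum_of_reroute (x := (n, s)) hO hm h_unc he hf
    (fun z hz ↦ ⟨_, Finset.mem_insert_self _ _, ?_⟩)
    (fun m' ↦ ⟨_, Finset.mem_insert_self _ _, ?_⟩)
  · have sum_e : ∑ z, e z = ε := (sum_lit_ite_var_eq n' (ε / 2)).trans (by ring)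
    have sum_f : ∑ m', f m' = d (Sum.inr m) (Sum.inl (n, s)) := by simp [f]
    linarith [hd.clause_lit_lt h_occ]
  · have h_max := hd.le_max (Sum.inl z) (Sum.inl (n, s))
    by_cases h_mentions : (b m).Mentions z.1
    · have hz' : z.1 = n' := (h_vars _ h_mentions).resolve_left hz
      simp only [e, if_pos hz']
      linarith [hd.le_lit_clause z m]
    · linarith [hd.le_lit_clause_of_not_mentions h_mentions, he z]
  · rcases eq_or_ne m' m with rfl | hne
    · simp [f, hd.self_eq_zero]
    · linarith [hd.le_max (Sum.inr m') (Sum.inl (n, s)), hd.le_clause_clause hne, hf m']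

theorem coversVar_of_clause_mem (hd : IsReductionDist b ε δ d) (hO : IsSwapOptimal d O)
    {m : Fin M} (hm : Sum.inr m ∈ O) (n : Fin N) : CoversVar O n := by
  by_contra h_unc
  have hε := hd.eps_pos
  let f (m' : Fin M) : ℝ := if m' = m then 1 + 2 * ε else 0
  have hf (m') : 0 ≤ f m' := by dsimp only [f]; split_ifs <;> linarith
  have h_sum := hd.le_sum_of_reroute (x := (n, true)) (e := fun _ ↦ 0) hO hm h_unc
    (fun _ ↦ le_rfl) hf (fun z _ ↦ ?_) (fun m' ↦ ⟨_, Finset.mem_insert_self _ _, ?_⟩)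
  · simp only [f, Finset.sum_const_zero, Finset.sum_ite_eq', Finset.mem_univ, if_true] at h_sum
    linarith
  · by_cases h_mentions : (b m).Mentions z.1
    · obtain ⟨s, hs⟩ := hd.coversVar_of_mentions hO hm h_mentions
      refine ⟨Sum.inl (z.1, s), by simp [hs], ?_⟩
      have h_le : d (Sum.inl z) (Sum.inl (z.1, s)) ≤ 1 := hd.lit_lit_le rfl
      linarith [hd.le_lit_clause z m]
    · refine ⟨_, Finset.mem_insert_self _ _, ?_⟩
      linarith [hd.le_max (Sum.inl z) (Sum.inl (n, true)),
        hd.le_lit_clause_of_not_mentions h_mentions]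
  · have h_max := hd.le_max (Sum.inr m') (Sum.inl (n, true))
    rcases eq_or_ne m' m with rfl | hne
    · simpa [f, hd.self_eq_zero] using h_max
    · linarith [hd.le_clause_clause hne, hf m']

theorem coversVar_of_two_lits_mem (hd : IsReductionDist b ε δ d) (hO : IsSwapOptimal d O)
    {x y : Lit N} (hx : Sum.inl x ∈ O) (hy : Sum.inl y ∈ O) (hne : x ≠ y) (hxy : x.1 = y.1)
    (n : Fin N) : CoversVar O n := by
  by_contra h_unc
  let e (z : Lit N) : ℝ := if z = y then 1 else 0
  have he (z) : 0 ≤ e z := by dsimp only [e]; split_ifs <;> norm_num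
  have h_mem : Sum.inl x ∈ insert (Sum.inl (n, true)) (O.erase (Sum.inl y)) := by simp [hx, hne]
  have h_sum := hd.le_sum_of_reroute (x := (n, true)) hO hy h_unc he hd.gap_nonneg
    (fun z _ ↦ ⟨_, h_mem, ?_⟩) (fun m ↦ ⟨_, h_mem, hd.clause_lit_le_add m hxy⟩)
  · have sum_e : ∑ z, e z = 1 := by simp [e]
    linarith [hd.sum_gap_lt]
  · rcases eq_or_ne z y with rfl | hzy
    · simpa [e, hd.self_eq_zero] using hd.lit_lit_le hxy.symm
    · suffices d (Sum.inl z) (Sum.inl x) ≤ d (Sum.inl z) (Sum.inl y) by linarith [he z]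
      by_cases h_var : z.1 = y.1
      · exact (hd.lit_lit_le (h_var.trans hxy.symm)).trans
          (hd.one_le (Sum.inl_injective.ne hzy))
      · exact (hd.le_max _ _).trans (hd.le_lit_lit h_var)

theorem coversVar (hd : IsReductionDist b ε δ d) (hO : IsSwapOptimal d O)
    (hcard : N ≤ O.card) (n : Fin N) : CoversVar O n := by
  by_contra h_unc
  have no_clause (m : Fin M) : Sum.inr m ∉ O := fun hm ↦
    h_unc (hd.coversVar_of_clause_mem hO hm n)
  obtain ⟨x, y, hx, hy, hne, hxy⟩ := exists_two_lits_of_not_coversVar no_clause hcard h_unc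
  exact h_unc (hd.coversVar_of_two_lits_mem hO hx hy hne hxy n)

theorem reasonableKM (hd : IsReductionDist b ε δ d) (hO : IsSwapOptimal d O)
    (hcard : O.card = N) : ReasonableKM O := by
  have h_covers := hd.coversVar hO hcard.ge
  refine ⟨?_, hcard, fun n ↦ (Bool.exists_bool.1 (h_covers n)).symm⟩
  rintro (x | m) hp
  · exact ⟨x, rfl⟩
  · exact absurd hp (inr_notMem_of_forall_coversVar h_covers hcard.le m)

end IsReductionDist

/-- The normalised weight `w(b_m) / (2W)` that enters the distance of a clause to its literals. -/
noncomputable def relWeight (w : Fin M → ℕ) (W : ℝ) (m : Fin M) : ℝ := w m / (2 * W)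

theorem relWeight_nonneg (hW : 0 ≤ W) (m : Fin M) : 0 ≤ relWeight w W m := by
  unfold relWeight
  positivity

theorem relWeight_le_quarter (hW : 0 < W) (hw : ∀ m, 2 * (w m : ℝ) ≤ W) (m : Fin M) :
    relWeight w W m ≤ 1 / 4 := by
  rw [relWeight, div_le_iff₀ (by positivity)]
  linarith [hw m]

theorem sum_relWeight_le_half (hW : 0 < W) (hsum : ∑ m, (w m : ℝ) ≤ W) :
    ∑ m, relWeight w W m ≤ 1 / 2 := by
  simp only [relWeight]
  rw [← Finset.sum_div, div_le_iff₀ (by positivity)]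
  linarith

theorem dKM_self (p : Pt N M) : dKM b w W c ε p p = 0 := by
  simp [dKM]

theorem dKM_lit_lit_of_ne {x y : Lit N} (h : x ≠ y) (hxy : x.1 = y.1) :
    dKM b w W c ε (Sum.inl x) (Sum.inl y) = 1 := by
  simp [dKM, h, hxy]

theorem dKM_lit_lit_of_var_ne {x y : Lit N} (h : x.1 ≠ y.1) :
    dKM b w W c ε (Sum.inl x) (Sum.inl y) = 1 + 2 * ε := by
  simp [dKM, h, ne_of_apply_ne Prod.fst h]

theorem dKM_clause_clause {m m' : Fin M} (h : m ≠ m') :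
    dKM b w W c ε (Sum.inr m) (Sum.inr m') = 1 + 2 * ε := by
  simp [dKM, h]

theorem dKM_clause_lit (x : Lit N) (m : Fin M) :
    dKM b w W c ε (Sum.inr m) (Sum.inl x) = dKM b w W c ε (Sum.inl x) (Sum.inr m) := by
  simp [dKM]

theorem dKM_lit_clause_of_occurs {x : Lit N} {m : Fin M} (h : Clause.occurs x (b m)) :
    dKM b w W c ε (Sum.inl x) (Sum.inr m) = 1 + ε * (3 / 2 + relWeight w W m) := by
  simp [dKM, h, relWeight]

theorem dKM_lit_clause_of_not_mentions {x : Lit N} {m : Fin M} (h : ¬ (b m).Mentions x.1) :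
    dKM b w W c ε (Sum.inl x) (Sum.inr m) = 1 + 2 * ε := by
  rw [Clause.mentions_iff_occurs_or_occurs_neg, not_or] at h
  simp [dKM, h.1, h.2]

theorem dKM_lit_clause_mem_Icc_of_mentions (hε : 0 ≤ ε) (hc : 1 ≤ c) (hW : 0 ≤ W) {x : Lit N}
    {m : Fin M} (h : (b m).Mentions x.1) :
    dKM b w W c ε (Sum.inl x) (Sum.inr m) ∈ Set.Icc (1 + ε * (3 / 2 + relWeight w W m))
      (1 + ε * (3 / 2 + c * relWeight w W m)) := by
  have h_le : 1 + ε * (3 / 2 + relWeight w W m) ≤ 1 + ε * (3 / 2 + c * relWeight w W m) := by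
    gcongr
    exact le_mul_of_one_le_left (relWeight_nonneg hW m) hc
  by_cases h_occ : Clause.occurs x (b m)
  · rw [dKM_lit_clause_of_occurs h_occ]
    exact ⟨le_rfl, h_le⟩
  · have h_neg := (Clause.mentions_iff_occurs_or_occurs_neg.1 h).resolve_left h_occ
    have h_eq : dKM b w W c ε (Sum.inl x) (Sum.inr m)
        = 1 + ε * (3 / 2 + c * relWeight w W m) := by
      simp [dKM, h_occ, h_neg, relWeight, mul_div_assoc]
    rw [h_eq]
    exact ⟨h_le, le_rfl⟩

theorem dKM_lit_clause_mem_Icc (hε : 0 ≤ ε) (hc1 : 1 ≤ c) (hc2 : c ≤ 2) (hW : 0 < W)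
    (hw : ∀ m, 2 * (w m : ℝ) ≤ W) (x : Lit N) (m : Fin M) :
    dKM b w W c ε (Sum.inl x) (Sum.inr m) ∈ Set.Icc (1 + 3 / 2 * ε) (1 + 2 * ε) := by
  by_cases h : (b m).Mentions x.1
  · have ht := relWeight_nonneg (w := w) hW.le m
    have hct : c * relWeight w W m ≤ 1 / 2 :=
      calc c * relWeight w W m ≤ 2 * (1 / 4) := by
            gcongr
            exact relWeight_le_quarter hW hw m
        _ = 1 / 2 := by norm_num
    obtain ⟨h_lower, h_upper⟩ := dKM_lit_clause_mem_Icc_of_mentions (w := w) hε hc1 hW.le h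
    exact ⟨by linarith [mul_nonneg hε ht], by linarith [mul_le_mul_of_nonneg_left hct hε]⟩
  · rw [dKM_lit_clause_of_not_mentions h]
    constructor <;> linarith

theorem dKM_mem_Icc_of_ne (hε : 0 ≤ ε) (hc1 : 1 ≤ c) (hc2 : c ≤ 2) (hW : 0 < W)
    (hw : ∀ m, 2 * (w m : ℝ) ≤ W) {p q : Pt N M} (h : p ≠ q) :
    dKM b w W c ε p q ∈ Set.Icc 1 (1 + 2 * ε) := by
  have lit_clause (x m) : dKM b w W c ε (Sum.inl x) (Sum.inr m) ∈ Set.Icc 1 (1 + 2 * ε) :=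
    Set.Icc_subset_Icc_left (by linarith) (dKM_lit_clause_mem_Icc hε hc1 hc2 hW hw x m)
  rcases p with x | m <;> rcases q with y | m'
  · by_cases hxy : x.1 = y.1
    · rw [dKM_lit_lit_of_ne (fun e ↦ h (congrArg _ e)) hxy]
      constructor <;> linarith
    · rw [dKM_lit_lit_of_var_ne hxy]
      constructor <;> linarith
  · exact lit_clause x m'
  · exact dKM_clause_lit y m ▸ lit_clause y m
  · rw [dKM_clause_clause fun e ↦ h (congrArg _ e)]
    constructor <;> linarith

theorem dKM_clause_lit_le_add (hε : 0 ≤ ε) (hc : 1 ≤ c) (hW : 0 ≤ W) {x y : Lit N} (m : Fin M)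
    (hxy : x.1 = y.1) :
    dKM b w W c ε (Sum.inr m) (Sum.inl x) ≤
      dKM b w W c ε (Sum.inr m) (Sum.inl y) + ε * (c - 1) * relWeight w W m := by
  rw [dKM_clause_lit, dKM_clause_lit]
  by_cases hy : (b m).Mentions y.1
  · have h_upper := (dKM_lit_clause_mem_Icc_of_mentions (w := w) hε hc hW (hxy ▸ hy)).2
    have h_lower := (dKM_lit_clause_mem_Icc_of_mentions (w := w) hε hc hW hy).1
    linarith
  · rw [dKM_lit_clause_of_not_mentions hy, dKM_lit_clause_of_not_mentions (hxy ▸ hy)]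
    have : 0 ≤ ε * (c - 1) * relWeight w W m :=
      mul_nonneg (mul_nonneg hε (sub_nonneg.2 hc)) (relWeight_nonneg hW m)
    linarith

theorem isReductionDist_dKM (hε : 0 < ε) (hc1 : 1 ≤ c) (hc2 : c ≤ 2) (hW : 0 < W)
    (hw : ∀ m, 2 * (w m : ℝ) ≤ W) (hsum : ∑ m, (w m : ℝ) ≤ W) :
    IsReductionDist b ε (fun m ↦ ε * (c - 1) * relWeight w W m) (dKM b w W c ε) where
  eps_pos := hε
  self_eq_zero := dKM_self
  one_le h := (dKM_mem_Icc_of_ne hε.le hc1 hc2 hW hw h).1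
  le_max p q := by
    rcases eq_or_ne p q with rfl | h
    · rw [dKM_self]
      positivity
    · exact (dKM_mem_Icc_of_ne hε.le hc1 hc2 hW hw h).2
  lit_lit_le {x y} hxy := by
    rcases eq_or_ne x y with rfl | h
    · exact dKM_self (Sum.inl x) ▸ zero_le_one
    · exact (dKM_lit_lit_of_ne h hxy).le
  le_lit_lit h := (dKM_lit_lit_of_var_ne h).ge
  le_clause_clause h := (dKM_clause_clause h).ge
  le_lit_clause x m := (dKM_lit_clause_mem_Icc hε.le hc1 hc2 hW hw x m).1
  le_lit_clause_of_not_mentions h := (dKM_lit_clause_of_not_mentions h).ge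
  clause_lit_lt {x m} h := by
    rw [dKM_clause_lit, dKM_lit_clause_of_occurs h]
    linarith [mul_le_mul_of_nonneg_left (relWeight_le_quarter hW hw m) hε.le]
  clause_lit_le_add m hxy := dKM_clause_lit_le_add hε.le hc1 hW.le m hxy
  gap_nonneg m := mul_nonneg (mul_nonneg hε.le (sub_nonneg.2 hc1)) (relWeight_nonneg hW.le m)
  sum_gap_lt := by
    rw [← Finset.mul_sum]
    calc ε * (c - 1) * ∑ m, relWeight w W m ≤ ε * 1 * (1 / 2) := by
          have hc : c - 1 ≤ 1 := by linarith
          have h_nonneg : 0 ≤ ∑ m, relWeight w W m :=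
            Finset.sum_nonneg fun m _ ↦ relWeight_nonneg hW.le m
          gcongr
          exact sum_relWeight_le_half hW hsum
      _ < 3 * ε := by linarith

theorem natCast_mul_weight_le {k : ℕ} (hk : k ≤ M) (w : Fin M → ℕ) (m : Fin M) :
    (k : ℝ) * w m ≤ (M : ℝ) * ((univ.sup w : ℕ) : ℝ) := by
  exact_mod_cast Nat.mul_le_mul hk (Finset.le_sup (Finset.mem_univ m))

theorem sum_weight_le (w : Fin M → ℕ) :
    ∑ m, (w m : ℝ) ≤ (M : ℝ) * ((univ.sup w : ℕ) : ℝ) := by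
  have h : ∑ m, w m ≤ M * univ.sup w := by
    simpa using univ.sum_le_card_nsmul w (univ.sup w) fun m hm ↦ Finset.le_sup hm
  exact_mod_cast h

theorem reasonableKM_of_localOpt_general (b : Fin M → Clause N) (w : Fin M → ℕ) {c W ε : ℝ}
    (hε : 0 < ε) (hc1 : 1 ≤ c) (hc2 : c ≤ 2) (hW : 0 < W) (hw : ∀ m, 2 * (w m : ℝ) ≤ W)
    (hsum : ∑ m, (w m : ℝ) ≤ W) (hcard : O.card = N)
    (hO : IsSwapOptimal (dKM b w W c ε) O) : ReasonableKM O :=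
  (isReductionDist_dKM hε hc1 hc2 hW hw hsum).reasonableKM hO hcard

end

/-- Every solution of size `N` that is locally optimal for the single-swap
neighbourhood of the DKM instance is reasonable. -/
theorem reasonableKM_of_localOpt {N M : ℕ} (hM : 2 ≤ M) (b : Fin M → Clause N) (w : Fin M → ℕ)
    (hw : ∀ m, 0 < w m) (c : ℝ) (hc1 : 1 < c) (hc2 : c < 2)
    (W : ℝ) (hW : W = (M : ℝ) * ((Finset.univ.sup w : ℕ) : ℝ))
    (ε : ℝ) (hε : ε = 1 / (4 * (N : ℝ) + 2 * (M : ℝ)))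
    (O : Finset (Pt N M)) (hcard : O.card = N)
    (hswap : ∀ p ∈ O, ∀ q : Pt N M, q ∉ O →
      ¬ phiKM (dKM b w W c ε) (insert q (O.erase p)) < phiKM (dKM b w W c ε) O) :
    ReasonableKM O := by
  have h_two (m : Fin M) : 2 * (w m : ℝ) ≤ W := hW ▸ natCast_mul_weight_le hM w m
  have hW_pos : 0 < W := by
    have : (0 : ℝ) < w ⟨0, by omega⟩ := Nat.cast_pos.2 (hw _)
    linarith [h_two ⟨0, by omega⟩]
  have hε_pos : 0 < ε := by
    have : 0 < M := by omega
    rw [hε]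
    positivity
  exact reasonableKM_of_localOpt_general b w hε_pos hc1.le hc2.le hW_pos h_two
    (hW ▸ sum_weight_le w) hcard hswap
end
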